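/- Let G_1, …, G_r and H be finite simple graphs, φ : V(H) → ⊔_{d=1}^r V(G_d) a function, and u_h ∈ ℂ^{π(φ(h))} unit vectors (h ∈ V(H)) such that for all distinct non-adjacent h, h' ∈ V(H), either ¬(φ(h) ≃ φ(h')) or ⟨u_h, u_{h'}⟩ = 0. Then ξ̄_f(H) ≤ ∑_{d=1}^r d·ξ̄_f(G_d), where ξ̄_f denotes the projective rank of the complement. -/

import Mathlib

open scoped Kronecker
open Matrix

namespace NCG
/-- For vertices of a disjoint family of graphs: `g ≃ g'` iff they lie in the same member
graph and are adjacent or equal there. -/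
def SimRel {r : ℕ} {V : Fin r → Type} (G : ∀ d, SimpleGraph (V d)) :
    (Σ d, V d) → (Σ d, V d) → Prop :=
  fun p q => ∃ e : p.1 = q.1,
    (G q.1).Adj (cast (congrArg V e) p.2) q.2 ∨ cast (congrArg V e) p.2 = q.2

/-- The projective rank of a graph. -/
noncomputable def projRank {V : Type} [Fintype V] [DecidableEq V] (G : SimpleGraph V) : ℝ :=
  sInf {t : ℝ | ∃ (a b : ℕ) (P : V → Matrix (Fin a) (Fin a) ℂ), 0 < b ∧
    (∀ g, (P g)ᴴ = P g) ∧ (∀ g, P g * P g = P g) ∧ (∀ g, (P g).rank = b) ∧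
    (∀ g g', G.Adj g g' → P g * P g' = 0) ∧ t = (a : ℝ) / (b : ℝ)}

/-!
Projective representations of two graphs on the same vertices multiply: `g ↦ P g ⊗ Q g` represents
the union of the graphs, so the projective rank of a union is at most the product of the ranks.
The projections onto pairwise orthogonal unit vectors of `ℂⁿ` form a representation of ratio `n`.
Hence, on the part of `H` that `φ` sends to `G_d`, where an edge of the complement of `H` either
maps to an edge of the complement of `G_d` or joins orthogonal vectors of `ℂᵈ`, the bound is `d`
times the projective rank of the complement of `G_d`. Representations of the parts, brought to a
common rank, combine block-diagonally to one of the whole complement, so the bounds add up.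
-/

open Filter Topology

section StarProjection

variable {R m n ι : Type*} [Semiring R] [StarRing R] [Fintype m]

theorem isStarProjection_kronecker {R : Type*} [CommSemiring R] [StarRing R] [Fintype n]
    {P : Matrix m m R} {Q : Matrix n n R} (hP : IsStarProjection P) (hQ : IsStarProjection Q) :
    IsStarProjection (P ⊗ₖ Q) where
  isIdempotentElem := by
    rw [IsIdempotentElem, ← mul_kronecker_mul, hP.isIdempotentElem.eq, hQ.isIdempotentElem.eq]
  isSelfAdjoint := by
    rw [isSelfAdjoint_iff, star_eq_conjTranspose, conjTranspose_kronecker,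
      ← star_eq_conjTranspose, ← star_eq_conjTranspose, hP.isSelfAdjoint.star_eq,
      hQ.isSelfAdjoint.star_eq]

theorem isStarProjection_vecMulVec_star {u : m → R} (hu : star u ⬝ᵥ u = 1) :
    IsStarProjection (vecMulVec u (star u)) where
  isIdempotentElem := by rw [IsIdempotentElem, vecMulVec_mul_vecMulVec, hu, one_smul]
  isSelfAdjoint := by
    rw [isSelfAdjoint_iff, star_eq_conjTranspose, conjTranspose_vecMulVec, star_star]

theorem isStarProjection_submatrix_equiv [Fintype n] {P : Matrix m m R}
    (hP : IsStarProjection P) (e : n ≃ m) : IsStarProjection (P.submatrix e e) where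
  isIdempotentElem := by
    rw [IsIdempotentElem, submatrix_mul_equiv, hP.isIdempotentElem.eq]
  isSelfAdjoint := by
    rw [isSelfAdjoint_iff, star_eq_conjTranspose, conjTranspose_submatrix,
      ← star_eq_conjTranspose, hP.isSelfAdjoint.star_eq]

theorem isStarProjection_blockDiagonal' [Fintype ι] [DecidableEq ι] {κ : ι → Type*}
    [∀ d, Fintype (κ d)] {P : ∀ d, Matrix (κ d) (κ d) R} (hP : ∀ d, IsStarProjection (P d)) :
    IsStarProjection (blockDiagonal' P) where
  isIdempotentElem := by
    rw [IsIdempotentElem, ← blockDiagonal'_mul]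
    exact congrArg blockDiagonal' (funext fun d => (hP d).isIdempotentElem.eq)
  isSelfAdjoint := by
    rw [isSelfAdjoint_iff, star_eq_conjTranspose, blockDiagonal'_conjTranspose]
    exact congrArg blockDiagonal' (funext fun d => (hP d).isSelfAdjoint.star_eq)

end StarProjection

theorem natCast_rank_eq_trace_of_isIdempotentElem {K n : Type*} [Field K] [Fintype n]
    {P : Matrix n n K} (hP : IsIdempotentElem P) : (P.rank : K) = P.trace := by
  classical
  have hidem : IsIdempotentElem (toLin' P) := hP.map (toLinAlgEquiv' (R := K) (n := n))
  rw [← trace_toLin'_eq, (LinearMap.IsIdempotentElem.isProj_range _ hidem).trace]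
  rfl

/-- `IsProjRep G b P` says that the matrices `P g`, with rows indexed by a finite type `n`, form a
`card n / b`-projective representation of `G`. Positivity of `b` is not included. -/
structure IsProjRep {V n : Type*} [Fintype n] (G : SimpleGraph V) (b : ℕ)
    (P : V → Matrix n n ℂ) : Prop where
  isStarProjection (g : V) : IsStarProjection (P g)
  rank_eq (g : V) : (P g).rank = b
  mul_eq_zero {g g' : V} : G.Adj g g' → P g * P g' = 0

namespace IsProjRep

variable {V W m n ι : Type*} [Fintype m] [Fintype n] {G G' : SimpleGraph V} {b b' : ℕ}
  {P : V → Matrix m m ℂ} {Q : V → Matrix n n ℂ}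

theorem trace_eq (hP : IsProjRep G b P) (g : V) : (P g).trace = b := by
  rw [← natCast_rank_eq_trace_of_isIdempotentElem (hP.isStarProjection g).isIdempotentElem,
    hP.rank_eq]

theorem of_trace_eq (hproj : ∀ g, IsStarProjection (P g)) (htrace : ∀ g, (P g).trace = b)
    (hmul : ∀ {g g'}, G.Adj g g' → P g * P g' = 0) : IsProjRep G b P where
  isStarProjection := hproj
  rank_eq g := by
    have hrank := natCast_rank_eq_trace_of_isIdempotentElem (hproj g).isIdempotentElem
    exact_mod_cast hrank.trans (htrace g)
  mul_eq_zero := hmul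

theorem comap {L : SimpleGraph W} (hP : IsProjRep G b P) (f : L →g G) :
    IsProjRep L b (P ∘ f) where
  isStarProjection h := hP.isStarProjection (f h)
  rank_eq h := hP.rank_eq (f h)
  mul_eq_zero hadj := hP.mul_eq_zero (f.map_adj hadj)

theorem submatrix_equiv (hP : IsProjRep G b P) (e : n ≃ m) :
    IsProjRep G b fun g => (P g).submatrix e e where
  isStarProjection g := isStarProjection_submatrix_equiv (hP.isStarProjection g) e
  rank_eq g := by rw [rank_submatrix, hP.rank_eq]
  mul_eq_zero hadj := by
    rw [submatrix_mul_equiv, hP.mul_eq_zero hadj, submatrix_zero, Pi.zero_apply, Pi.zero_apply]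

theorem one [DecidableEq n] :
    IsProjRep (⊥ : SimpleGraph V) (Fintype.card n) fun _ => (1 : Matrix n n ℂ) where
  isStarProjection _ := .one _
  rank_eq _ := rank_one
  mul_eq_zero hadj := hadj.elim

theorem vecMulVec_star {u : V → n → ℂ} (hunit : ∀ g, star (u g) ⬝ᵥ u g = 1)
    (horth : ∀ {g g'}, G.Adj g g' → star (u g) ⬝ᵥ u g' = 0) :
    IsProjRep G 1 fun g => vecMulVec (u g) (star (u g)) :=
  of_trace_eq (fun g => isStarProjection_vecMulVec_star (hunit g))
    (fun g => by rw [trace_vecMulVec, dotProduct_comm, hunit, Nat.cast_one])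
    (fun hadj => by rw [vecMulVec_mul_vecMulVec, horth hadj, zero_smul, vecMulVec_zero])

theorem kronecker (hP : IsProjRep G b P) (hQ : IsProjRep G' b' Q) :
    IsProjRep (G ⊔ G') (b * b') fun g => P g ⊗ₖ Q g :=
  of_trace_eq
    (fun g => isStarProjection_kronecker (hP.isStarProjection g) (hQ.isStarProjection g))
    (fun g => by rw [trace_kronecker, hP.trace_eq, hQ.trace_eq, Nat.cast_mul])
    (fun hadj => by
      rw [← mul_kronecker_mul]
      rcases hadj with hadj | hadj
      · rw [hP.mul_eq_zero hadj, zero_kronecker]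
      · rw [hQ.mul_eq_zero hadj, kronecker_zero])

theorem kronecker_one [DecidableEq n] (hP : IsProjRep G b P) :
    IsProjRep G (b * Fintype.card n) fun g => P g ⊗ₖ (1 : Matrix n n ℂ) := by
  simpa only [sup_bot_eq] using hP.kronecker (one (n := n))

theorem blockDiagonal' [Fintype ι] [DecidableEq ι] {κ : ι → Type*} [∀ d, Fintype (κ d)]
    {f : V → ι} {P : ∀ d, {g | f g = d} → Matrix (κ d) (κ d) ℂ}
    (hP : ∀ d, IsProjRep (G.induce {g | f g = d}) b (P d)) :
    IsProjRep G b fun g =>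
      Matrix.blockDiagonal' fun d => if hg : f g = d then P d ⟨g, hg⟩ else 0 := by
  refine of_trace_eq (fun g => isStarProjection_blockDiagonal' fun d => ?_) (fun g => ?_)
    fun {g g'} hadj => ?_
  · split_ifs with hg
    · exact (hP d).isStarProjection ⟨g, hg⟩
    · exact .zero _
  · have htrace (d : ι) :
        trace (if hg : f g = d then P d ⟨g, hg⟩ else 0) = if f g = d then (b : ℂ) else 0 := by
      split_ifs with hg
      · exact (hP d).trace_eq ⟨g, hg⟩
      · exact trace_zero _ _
    simp only [trace_blockDiagonal', htrace, Finset.sum_ite_eq, Finset.mem_univ, if_true]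
  · rw [← blockDiagonal'_mul, ← blockDiagonal'_zero]
    congr 1
    funext d
    split_ifs with hg hg'
    · exact (hP d).mul_eq_zero (g := ⟨g, hg⟩) (g' := ⟨g', hg'⟩) hadj
    all_goals simp only [mul_zero, zero_mul, Pi.zero_apply]

end IsProjRep

section ProjRatios

variable {V W n ι : Type*}

/-- The ratios `a / b` of the projective representations of `G`; their infimum is the projective
rank of `G`. -/
def projRatios (G : SimpleGraph V) : Set ℝ :=
  {t | ∃ (a b : ℕ) (P : V → Matrix (Fin a) (Fin a) ℂ),
    0 < b ∧ IsProjRep G b P ∧ t = (a : ℝ) / b}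

theorem IsProjRep.card_div_mem_projRatios [Fintype n] {G : SimpleGraph V} {b : ℕ}
    {P : V → Matrix n n ℂ} (hP : IsProjRep G b P) (hb : 0 < b) :
    (Fintype.card n : ℝ) / b ∈ projRatios G :=
  ⟨_, b, _, hb, hP.submatrix_equiv (Fintype.equivFin n).symm, rfl⟩

theorem projRatios_bddBelow (G : SimpleGraph V) : BddBelow (projRatios G) := by
  refine ⟨0, ?_⟩
  rintro t ⟨a, b, -, -, -, rfl⟩
  positivity

theorem card_mem_projRatios [Fintype n] {G : SimpleGraph V} {u : V → n → ℂ}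
    (hunit : ∀ g, star (u g) ⬝ᵥ u g = 1)
    (horth : ∀ {g g'}, G.Adj g g' → star (u g) ⬝ᵥ u g' = 0) :
    (Fintype.card n : ℝ) ∈ projRatios G := by
  simpa only [Nat.cast_one, div_one] using
    (IsProjRep.vecMulVec_star hunit horth).card_div_mem_projRatios one_pos

theorem projRatios_nonempty [Finite V] (G : SimpleGraph V) : (projRatios G).Nonempty := by
  classical
  have := Fintype.ofFinite V
  refine ⟨_, card_mem_projRatios (u := fun g => Pi.single g 1) (fun g => ?_) fun hadj => ?_⟩
  · rw [dotProduct_single_one, Pi.star_apply, Pi.single_eq_same, star_one]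
  · rw [dotProduct_single_one, Pi.star_apply, Pi.single_eq_of_ne hadj.ne', star_zero]

theorem projRatios_subset_of_hom {G : SimpleGraph V} {L : SimpleGraph W} (f : L →g G) :
    projRatios G ⊆ projRatios L := by
  rintro t ⟨a, b, P, hb, hP, rfl⟩
  exact ⟨a, b, P ∘ f, hb, hP.comap f, rfl⟩

theorem mul_mem_projRatios_sup {G G' : SimpleGraph V} {s t : ℝ} (hs : s ∈ projRatios G)
    (ht : t ∈ projRatios G') : s * t ∈ projRatios (G ⊔ G') := by
  obtain ⟨a, b, P, hb, hP, rfl⟩ := hs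
  obtain ⟨a', b', P', hb', hP', rfl⟩ := ht
  simpa only [Fintype.card_prod, Fintype.card_fin, Nat.cast_mul, mul_div_mul_comm] using
    (hP.kronecker hP').card_div_mem_projRatios (Nat.mul_pos hb hb')

/- Block-diagonal sums need blocks of equal rank, so each representation is first inflated to the
product of all the ranks. -/
theorem sum_mem_projRatios [Fintype ι] {G : SimpleGraph V} (f : V → ι) {t : ι → ℝ}
    (ht : ∀ d, t d ∈ projRatios (G.induce {g | f g = d})) : ∑ d, t d ∈ projRatios G := by
  classical
  choose a b P hb hP ht using ht
  choose c hc using fun d => Finset.dvd_prod_of_mem b (Finset.mem_univ d)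
  have hB : 0 < ∏ d, b d := Finset.prod_pos fun d _ => hb d
  have hinflate (d : ι) : IsProjRep (G.induce {g | f g = d}) (∏ d, b d)
      fun g => P d g ⊗ₖ (1 : Matrix (Fin (c d)) (Fin (c d)) ℂ) := by
    simpa only [hc d, Fintype.card_fin] using (hP d).kronecker_one (n := Fin (c d))
  convert (IsProjRep.blockDiagonal' hinflate).card_div_mem_projRatios hB using 1
  simp only [Fintype.card_sigma, Fintype.card_prod, Fintype.card_fin, Nat.cast_sum,
    Finset.sum_div]
  refine Finset.sum_congr rfl fun d _ => ?_
  have hcd : c d ≠ 0 := right_ne_zero_of_mul (hc d ▸ hB.ne')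
  rw [ht d, hc d, Nat.cast_mul, Nat.cast_mul, mul_div_mul_right _ _ (Nat.cast_ne_zero.mpr hcd)]

end ProjRatios

section ProjRank

variable {V W : Type} [Fintype V] [DecidableEq V] [Fintype W] [DecidableEq W]

theorem projRank_eq_sInf_projRatios (G : SimpleGraph V) : projRank G = sInf (projRatios G) := by
  refine congrArg sInf (Set.ext fun t => ?_)
  constructor
  · rintro ⟨a, b, P, hb, hstar, hidem, hrank, hmul, rfl⟩
    exact ⟨a, b, P, hb, ⟨fun g => ⟨hidem g, hstar g⟩, hrank, hmul _ _⟩, rfl⟩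
  · rintro ⟨a, b, P, hb, hP, rfl⟩
    exact ⟨a, b, P, hb, fun g => (hP.isStarProjection g).isSelfAdjoint,
      fun g => (hP.isStarProjection g).isIdempotentElem, hP.rank_eq, fun _ _ => hP.mul_eq_zero, rfl⟩

theorem projRank_le_of_mem_projRatios {G : SimpleGraph V} {t : ℝ} (ht : t ∈ projRatios G) :
    projRank G ≤ t :=
  (projRank_eq_sInf_projRatios G).trans_le (csInf_le (projRatios_bddBelow G) ht)

theorem exists_seq_projRatios_tendsto_projRank (G : SimpleGraph V) :
    ∃ s : ℕ → ℝ, Tendsto s atTop (𝓝 (projRank G)) ∧ ∀ k, s k ∈ projRatios G := by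
  obtain ⟨s, -, hs, hmem⟩ :=
    exists_seq_tendsto_sInf (projRatios_nonempty G) (projRatios_bddBelow G)
  exact ⟨s, projRank_eq_sInf_projRatios G ▸ hs, hmem⟩

theorem projRank_nonneg (G : SimpleGraph V) : 0 ≤ projRank G := by
  obtain ⟨s, hs, hmem⟩ := exists_seq_projRatios_tendsto_projRank G
  refine ge_of_tendsto' hs fun k => ?_
  obtain ⟨a, b, -, -, -, hk⟩ := hmem k
  rw [hk]
  positivity

theorem projRank_le_of_hom {G : SimpleGraph V} {L : SimpleGraph W} (f : L →g G) :
    projRank L ≤ projRank G := by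
  obtain ⟨s, hs, hmem⟩ := exists_seq_projRatios_tendsto_projRank G
  exact ge_of_tendsto' hs fun k =>
    projRank_le_of_mem_projRatios (projRatios_subset_of_hom f (hmem k))

theorem projRank_sup_le_mul (G G' : SimpleGraph V) :
    projRank (G ⊔ G') ≤ projRank G * projRank G' := by
  obtain ⟨s, hs, hmem⟩ := exists_seq_projRatios_tendsto_projRank G
  obtain ⟨s', hs', hmem'⟩ := exists_seq_projRatios_tendsto_projRank G'
  exact ge_of_tendsto' (hs.mul hs') fun k =>
    projRank_le_of_mem_projRatios (mul_mem_projRatios_sup (hmem k) (hmem' k))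

theorem projRank_le_sum_induce {ι : Type*} [Fintype ι] [DecidableEq ι] (G : SimpleGraph V)
    (f : V → ι) : projRank G ≤ ∑ d, projRank (G.induce {g | f g = d}) := by
  choose s hs hmem using fun d =>
    exists_seq_projRatios_tendsto_projRank (G.induce {g | f g = d})
  exact ge_of_tendsto' (tendsto_finsetSum _ fun d _ => hs d) fun k =>
    projRank_le_of_mem_projRatios (sum_mem_projRatios f fun d => hmem d k)

theorem projRank_le_card_mul {n : Type*} [Fintype n] {G : SimpleGraph V} {L : SimpleGraph W}
    (f : W → V) {u : W → n → ℂ} (hunit : ∀ h, star (u h) ⬝ᵥ u h = 1)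
    (hadj : ∀ {h h'}, L.Adj h h' → G.Adj (f h) (f h') ∨ star (u h) ⬝ᵥ u h' = 0) :
    projRank L ≤ Fintype.card n * projRank G := by
  have hcard : projRank (L \ G.comap f) ≤ Fintype.card n :=
    projRank_le_of_mem_projRatios
      (card_mem_projRatios hunit fun hL => (hadj hL.1).resolve_left hL.2)
  calc projRank L
      ≤ projRank (L \ G.comap f ⊔ G.comap f) := projRank_le_of_hom (.ofLE le_sdiff_sup)
    _ ≤ projRank (L \ G.comap f) * projRank (G.comap f) := projRank_sup_le_mul _ _
    _ ≤ Fintype.card n * projRank G :=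
      mul_le_mul hcard (projRank_le_of_hom ⟨f, id⟩) (projRank_nonneg _) (Nat.cast_nonneg _)

end ProjRank

theorem projRankCompl_sum_bound_general {ι : Type*} [Fintype ι] {κ : ι → Type*} [∀ d, Fintype (κ d)]
    {V : ι → Type} [∀ d, Fintype (V d)] [∀ d, DecidableEq (V d)] (G : ∀ d, SimpleGraph (V d))
    {VH : Type} [Fintype VH] [DecidableEq VH] (H : SimpleGraph VH)
    (φ : VH → Σ d, V d) (u : ∀ h, κ (φ h).1 → ℂ) (hunit : ∀ h, star (u h) ⬝ᵥ u h = 1)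
    (horth : ∀ h h', Hᶜ.Adj h h' → ∀ e : (φ h').1 = (φ h).1,
      (G (φ h).1)ᶜ.Adj (φ h).2 (e ▸ (φ h').2) ∨ star (u h) ⬝ᵥ (e ▸ u h') = 0) :
    projRank Hᶜ ≤ ∑ d, (Fintype.card (κ d) : ℝ) * projRank (G d)ᶜ := by
  classical
  refine (projRank_le_sum_induce Hᶜ fun h => (φ h).1).trans (Finset.sum_le_sum fun d _ => ?_)
  refine projRank_le_card_mul (u := fun h => h.2 ▸ u h) (fun h => h.2 ▸ (φ h).2) ?_ ?_
  · rintro ⟨h, rfl⟩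
    exact hunit h
  · rintro ⟨h, rfl⟩ ⟨h', e⟩ hadj
    exact horth h h' hadj e

theorem compl_adj_or_dotProduct_eq_zero {r : ℕ} {V : Fin r → Type}
    {G : ∀ d, SimpleGraph (V d)} {p q : Σ d, V d} {x : Fin (p.1.1 + 1) → ℂ}
    {y : Fin (q.1.1 + 1) → ℂ}
    (h : ¬ SimRel G p q ∨ ∀ e : p.1 = q.1,
      star x ⬝ᵥ (fun i => y (Fin.cast (congrArg (fun d : Fin r => d.1 + 1) e) i)) = 0)
    (e : q.1 = p.1) :
    (G p.1)ᶜ.Adj p.2 (e ▸ q.2) ∨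
      star x ⬝ᵥ (e ▸ y : Fin (p.1.1 + 1) → ℂ) = 0 := by
  obtain ⟨d, g⟩ := p
  obtain ⟨d', g'⟩ := q
  obtain rfl : d' = d := e
  refine h.imp (fun hsim => ?_) fun hxy => hxy rfl
  exact (SimpleGraph.compl_adj _ _ _).mpr
    ⟨fun heq => hsim ⟨rfl, .inr heq⟩, fun hadj => hsim ⟨rfl, .inl hadj⟩⟩

theorem projRankCompl_sum_bound
    {r : ℕ} {V : Fin r → Type} [∀ d, Fintype (V d)] [∀ d, DecidableEq (V d)]
    (G : ∀ d, SimpleGraph (V d))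
    {VH : Type} [Fintype VH] [DecidableEq VH] (H : SimpleGraph VH)
    (φ : VH → Σ d, V d) (u : ∀ h : VH, Fin ((φ h).1.1 + 1) → ℂ)
    (hunit : ∀ h, star (u h) ⬝ᵥ u h = 1)
    (horth : ∀ h h', h ≠ h' → ¬ H.Adj h h' →
      (¬ SimRel G (φ h) (φ h') ∨
        ∀ e : (φ h).1 = (φ h').1,
          star (u h) ⬝ᵥ
            (fun i => u h' (Fin.cast (congrArg (fun d : Fin r => d.1 + 1) e) i)) = 0)) :
    projRank Hᶜ ≤ ∑ d : Fin r, ((d.1 + 1 : ℕ) : ℝ) * projRank (G d)ᶜ := by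
  simpa only [Fintype.card_fin] using
    projRankCompl_sum_bound_general (κ := fun d : Fin r => Fin (d.1 + 1)) G H φ u hunit
      fun h h' hadj => compl_adj_or_dotProduct_eq_zero (horth h h' hadj.1 hadj.2)

end NCG
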